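/- arXiv:2004.00113 — 6 statements merged into one kernel-verified Lean document; each statement's English description precedes it below -/
import Mathlib

section
/- Let S ⊆ ℝ be a convex set and let g : ℝ → ℝ be convex on S. Then the perspective function (x, y) ↦ y · g(x / y) is convex on the set {(x, y) ∈ ℝ² : y > 0 and x / y ∈ S}. -/
/-- The slope of a convex combination of two points in the upper half-plane is the convex
combination of their slopes, with weights proportional to the heights. -/
lemma convexCombination_div_eq {x y u v a b : ℝ} (hy : 0 < y) (hv : 0 < v)
    (h : 0 < a * y + b * v) :
    (a * x + b * u) / (a * y + b * v) =
      (a * y / (a * y + b * v)) * (x / y) + (b * v / (a * y + b * v)) * (u / v) := by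
  have := h.ne'
  field_simp

/-- The perspective `(x, y) ↦ y * g (x / y)` of a function `g` convex on a
convex set `S ⊆ ℝ` is convex on `{(x, y) | 0 < y ∧ x / y ∈ S}`. -/
theorem perspective_convexOn (S : Set ℝ) (hS : Convex ℝ S)
    (g : ℝ → ℝ) (hg : ConvexOn ℝ S g) :
    ConvexOn ℝ {p : ℝ × ℝ | 0 < p.2 ∧ p.1 / p.2 ∈ S}
      (fun p : ℝ × ℝ => p.2 * g (p.1 / p.2)) := by
  have height_pos {y v a b : ℝ} (hy : 0 < y) (hv : 0 < v) (ha : 0 ≤ a) (hb : 0 ≤ b)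
      (hab : a + b = 1) : 0 < a * y + b * v :=
    convex_Ioi (0 : ℝ) hy hv ha hb hab
  constructor
  · rintro ⟨x, y⟩ ⟨hy, hx⟩ ⟨u, v⟩ ⟨hv, hu⟩ a b ha hb hab
    dsimp only at hy hx hv hu
    have h := height_pos hy hv ha hb hab
    refine ⟨h, ?_⟩
    simp only [Prod.smul_mk, Prod.mk_add_mk, smul_eq_mul]
    rw [convexCombination_div_eq hy hv h]
    exact hS hx hu (by positivity) (by positivity) (by rw [← add_div, div_self h.ne'])
  · rintro ⟨x, y⟩ ⟨hy, hx⟩ ⟨u, v⟩ ⟨hv, hu⟩ a b ha hb hab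
    dsimp only at hy hx hv hu
    have h := height_pos hy hv ha hb hab
    simp only [Prod.smul_mk, Prod.mk_add_mk, smul_eq_mul]
    rw [convexCombination_div_eq hy hv h]
    have hconv := hg.2 hx hu (show 0 ≤ a * y / (a * y + b * v) by positivity)
      (show 0 ≤ b * v / (a * y + b * v) by positivity) (by rw [← add_div, div_self h.ne'])
    simp only [smul_eq_mul] at hconv
    refine (mul_le_mul_of_nonneg_left hconv h.le).trans_eq ?_
    have := h.ne'
    field_simp
end

section
/- Let α > 0, B > 0, h > 0 and N₀ > 0 be real constants. The set {(l, E, t) ∈ ℝ³ : l ≥ 0, E ≥ 0, t > 0, α·l ≤ t · B · ln(1 + (E/t) · h / (N₀·B))} is a convex subset of ℝ³. -/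
/-- Jensen's inequality for the logarithm with unnormalized positive weights. -/
lemma mul_log_add_mul_log_le {s t x y : ℝ} (hs : 0 < s) (ht : 0 < t) (hx : 0 < x) (hy : 0 < y) :
    s * Real.log x + t * Real.log y ≤ (s + t) * Real.log ((s * x + t * y) / (s + t)) := by
  have hst : 0 < s + t := add_pos hs ht
  have key := strictConcaveOn_log_Ioi.concaveOn.2 (Set.mem_Ioi.2 hx) (Set.mem_Ioi.2 hy)
    (div_pos hs hst).le (div_pos ht hst).le (by field_simp)
  simp only [smul_eq_mul] at key
  calc s * Real.log x + t * Real.log y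
      = (s + t) * (s / (s + t) * Real.log x + t / (s + t) * Real.log y) := by field_simp
    _ ≤ (s + t) * Real.log (s / (s + t) * x + t / (s + t) * y) :=
        mul_le_mul_of_nonneg_left key hst.le
    _ = (s + t) * Real.log ((s * x + t * y) / (s + t)) := by
        congr 2
        ring

/-- For constants `α > 0`, `B > 0`, `h > 0`, `N₀ > 0`, the set
`{(l, E, t) | 0 ≤ l, 0 ≤ E, 0 < t, α l ≤ t B ln (1 + (E/t) h/(N₀ B))}`
is a convex subset of `ℝ³`. -/
theorem shuffle_constraint_convex (α B h N₀ : ℝ) (hα : 0 < α) (hB : 0 < B)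
    (hh : 0 < h) (hN₀ : 0 < N₀) :
    Convex ℝ {p : ℝ × ℝ × ℝ | 0 ≤ p.1 ∧ 0 ≤ p.2.1 ∧ 0 < p.2.2 ∧
      α * p.1 ≤ p.2.2 * B * Real.log (1 + (p.2.1 / p.2.2) * h / (N₀ * B))} := by
  rw [convex_iff_forall_pos]
  rintro ⟨l₁, E₁, t₁⟩ ⟨hl₁, hE₁, ht₁, hc₁⟩ ⟨l₂, E₂, t₂⟩ ⟨hl₂, hE₂, ht₂, hc₂⟩ a b ha hb -
  dsimp only at hl₁ hE₁ ht₁ hc₁ hl₂ hE₂ ht₂ hc₂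
  simp only [Prod.smul_mk, Prod.mk_add_mk, smul_eq_mul, Set.mem_ofPred_eq]
  refine ⟨by positivity, by positivity, by positivity, ?_⟩
  have key := mul_log_add_mul_log_le (mul_pos ha ht₁) (mul_pos hb ht₂)
    (show 0 < 1 + E₁ / t₁ * h / (N₀ * B) by positivity)
    (show 0 < 1 + E₂ / t₂ * h / (N₀ * B) by positivity)
  have hmean : (a * t₁ * (1 + E₁ / t₁ * h / (N₀ * B)) + b * t₂ * (1 + E₂ / t₂ * h / (N₀ * B))) /
      (a * t₁ + b * t₂) = 1 + (a * E₁ + b * E₂) / (a * t₁ + b * t₂) * h / (N₀ * B) := by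
    field_simp
    ring
  rw [hmean] at key
  linarith [mul_le_mul_of_nonneg_left hc₁ ha.le, mul_le_mul_of_nonneg_left hc₂ hb.le,
    mul_le_mul_of_nonneg_left key hB.le]
end

section
/- Fix an integer N ≥ 1 and positive real constants τ, L, α, β, B, N₀, and for each n = 1,…,N positive constants c_n, f_n^max, h_n, p_n^max. Then the set of tuples (l, tᴹ, tˢ, E, tᴿ) with l, tᴹ, tˢ, E ∈ ℝᴺ and tᴿ ∈ ℝ satisfying: (i) l_n ≥ 0, tᴹ_n ≥ 0, tˢ_n > 0, E_n ≥ 0 for all n and tᴿ ≥ 0; (ii) Σ_{n=1}^N l_n = L; (iii) c_n·l_n ≤ tᴹ_n·f_n^max for all n; (iv) β·L·max_m (c_m/f_m^max) ≤ tᴿ; (v) tᴹ_n + tˢ_n ≤ τ − tᴿ for all n; (vi) α·l_n ≤ tˢ_n · B · ln(1 + (E_n/tˢ_n)·h_n/(N₀·B)) for all n; (vii) E_n ≤ tˢ_n · p_n^max for all n, is a convex subset of ℝ^{4N+1}. -/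
open Finset

/-- The perspective `(x, s) ↦ s * g (x / s)` of a concave function is concave. -/
theorem ConcaveOn.perspective_le {S : Set ℝ} {g : ℝ → ℝ} (hg : ConcaveOn ℝ S g)
    {s t x y a b : ℝ} (hs : 0 < s) (ht : 0 < t) (hx : x / s ∈ S) (hy : y / t ∈ S)
    (ha : 0 ≤ a) (hb : 0 ≤ b) (hst : 0 < a * s + b * t) :
    a * (s * g (x / s)) + b * (t * g (y / t)) ≤
      (a * s + b * t) * g ((a * x + b * y) / (a * s + b * t)) := by
  have key := hg.2 hx hy (show 0 ≤ a * s / (a * s + b * t) by positivity)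
    (show 0 ≤ b * t / (a * s + b * t) by positivity) (by field_simp)
  simp only [smul_eq_mul] at key
  have harg : a * s / (a * s + b * t) * (x / s) + b * t / (a * s + b * t) * (y / t) =
      (a * x + b * y) / (a * s + b * t) := by
    field_simp
  rw [harg] at key
  calc a * (s * g (x / s)) + b * (t * g (y / t))
      = (a * s + b * t) * (a * s / (a * s + b * t) * g (x / s) +
          b * t / (a * s + b * t) * g (y / t)) := by
        field_simp
    _ ≤ _ := mul_le_mul_of_nonneg_left key hst.le

theorem concaveOn_log_one_add_mul_div {k d : ℝ} (hk : 0 ≤ k) (hd : 0 ≤ d) :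
    ConcaveOn ℝ (Set.Ici 0) fun u : ℝ => Real.log (1 + u * k / d) := by
  refine ⟨convex_Ici 0, fun u hu v hv a b ha hb hab => ?_⟩
  have hu' : (0 : ℝ) ≤ u := hu
  have hv' : (0 : ℝ) ≤ v := hv
  have key := strictConcaveOn_log_Ioi.concaveOn.2
    (show 1 + u * k / d ∈ Set.Ioi 0 from Set.mem_Ioi.mpr (by positivity))
    (show 1 + v * k / d ∈ Set.Ioi 0 from Set.mem_Ioi.mpr (by positivity)) ha hb hab
  have harg : a • (1 + u * k / d) + b • (1 + v * k / d) = 1 + (a • u + b • v) * k / d := by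
    simp only [smul_eq_mul]
    linear_combination hab
  rwa [harg] at key

/-- The feasible set of the reformulated energy-efficient collaborative
computing problem (P2) is convex. -/
theorem feasible_set_convex (N : ℕ) (hN : 1 ≤ N)
    (τ L α β B N₀ : ℝ) (hτ : 0 < τ) (hL : 0 < L) (hα : 0 < α) (hβ : 0 < β)
    (hB : 0 < B) (hN₀ : 0 < N₀)
    (c fmax h pmax : Fin N → ℝ)
    (hc : ∀ n, 0 < c n) (hfmax : ∀ n, 0 < fmax n)
    (hh : ∀ n, 0 < h n) (hpmax : ∀ n, 0 < pmax n) :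
    Convex ℝ
      {x : (Fin N → ℝ) × (Fin N → ℝ) × (Fin N → ℝ) × (Fin N → ℝ) × ℝ |
        (∀ n, 0 ≤ x.1 n) ∧ (∀ n, 0 ≤ x.2.1 n) ∧ (∀ n, 0 < x.2.2.1 n) ∧
        (∀ n, 0 ≤ x.2.2.2.1 n) ∧ 0 ≤ x.2.2.2.2 ∧
        (∑ n : Fin N, x.1 n) = L ∧
        (∀ n, c n * x.1 n ≤ x.2.1 n * fmax n) ∧
        β * L * (Finset.univ.sup'
            (Finset.univ_nonempty_iff.mpr (Fin.pos_iff_nonempty.mp hN))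
            (fun m => c m / fmax m)) ≤ x.2.2.2.2 ∧
        (∀ n, x.2.1 n + x.2.2.1 n ≤ τ - x.2.2.2.2) ∧
        (∀ n, α * x.1 n ≤ x.2.2.1 n * B *
          Real.log (1 + (x.2.2.2.1 n / x.2.2.1 n) * h n / (N₀ * B))) ∧
        (∀ n, x.2.2.2.1 n ≤ x.2.2.1 n * pmax n)} := by
  rintro ⟨l, tM, tS, E, tR⟩ ⟨hl, htM, htS, hE, htR, hsum, hmap, hred, hlat, hrate, hpow⟩
    ⟨l', tM', tS', E', tR'⟩
    ⟨hl', htM', htS', hE', htR', hsum', hmap', hred', hlat', hrate', hpow'⟩ a b ha hb hab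
  simp only [Set.mem_ofPred_eq, Prod.smul_mk, Prod.mk_add_mk, Pi.add_apply, Pi.smul_apply,
    smul_eq_mul] at *
  have htS_pos (n) : 0 < a * tS n + b * tS' n :=
    convex_Ioi (0 : ℝ) (htS n) (htS' n) ha hb hab
  refine ⟨fun n => ?_, fun n => ?_, htS_pos, fun n => ?_, ?_, ?_, fun n => ?_, ?_, fun n => ?_,
    fun n => ?_, fun n => ?_⟩
  · have := hl n
    have := hl' n
    positivity
  · have := htM n
    have := htM' n
    positivity
  · have := hE n
    have := hE' n
    positivity
  · positivity
  · rw [Finset.sum_add_distrib, ← Finset.mul_sum, ← Finset.mul_sum, hsum, hsum', ← add_mul, hab,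
      one_mul]
  · linear_combination a * hmap n + b * hmap' n
  · exact convex_Ici (𝕜 := ℝ) _ (Set.mem_Ici.mpr hred) (Set.mem_Ici.mpr hred') ha hb hab
  · linear_combination a * hlat n + b * hlat' n + τ * hab
  · have key := (concaveOn_log_one_add_mul_div (hh n).le (mul_pos hN₀ hB).le).perspective_le
      (htS n) (htS' n) (div_nonneg (hE n) (htS n).le) (div_nonneg (hE' n) (htS' n).le)
      ha hb (htS_pos n)
    linear_combination a * hrate n + b * hrate' n + B * key
  · linear_combination a * hpow n + b * hpow' n
end

section
/- Fix an integer N ≥ 1 and positive real constants τ, L, α, β, B, N₀, and for each n = 1,…,N positive constants c_n, f_n^max, h_n, p_n^max; write R_n = B·ln(1 + p_n^max·h_n/(N₀·B)). Then there exist l, tᴹ, tˢ, p ∈ ℝᴺ and tᴿ ∈ ℝ, all with nonnegative entries, satisfying Σ_{n=1}^N l_n = L; c_n·l_n ≤ tᴹ_n·f_n^max for all n; β·L·max_m (c_m/f_m^max) ≤ tᴿ; tᴹ_n + tˢ_n ≤ τ − tᴿ for all n; α·l_n ≤ tˢ_n · B·ln(1 + p_n·h_n/(N₀·B)) for all n;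 and p_n ≤ p_n^max for all n; if and only if L ≤ Σ_{n=1}^N [ (τ − β·L·max_m(c_m/f_m^max)) / (1 + (α·f_n^max/c_n)/R_n) ] · (f_n^max/c_n). -/
open Finset

/-- A nonnegative allocation of a positive load within given capacities exists once the total
capacity suffices. -/
lemma exists_nonneg_le_sum_eq {ι : Type*} [Fintype ι] {L : ℝ} (hL : 0 < L) {cap : ι → ℝ}
    (hcap : ∀ i, 0 ≤ cap i) (hle : L ≤ ∑ i, cap i) :
    ∃ l : ι → ℝ, (∀ i, 0 ≤ l i) ∧ (∀ i, l i ≤ cap i) ∧ ∑ i, l i = L := by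
  have hS : 0 < ∑ i, cap i := hL.trans_le hle
  refine ⟨fun i => cap i * (L / ∑ j, cap j), fun i => mul_nonneg (hcap i) (by positivity),
    fun i => mul_le_of_le_one_right (hcap i) ((div_le_one hS).2 hle), ?_⟩
  rw [← Finset.sum_mul, mul_div_cancel₀ _ (ne_of_gt hS)]

/-- The load a device can map and transmit within time `T`, written with the total time
`c / f + α / R` it spends per bit. -/
lemma capacity_eq {T c f α R : ℝ} (hc : 0 < c) (hf : 0 < f) (hα : 0 < α) (hR : 0 < R) :
    T / (1 + (α * f / c) / R) * (f / c) = T / (c / f + α / R) := by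
  have h₁ : 0 < 1 + (α * f / c) / R := by positivity
  have h₂ : 0 < c / f + α / R := by positivity
  rw [div_mul_eq_mul_div, div_eq_div_iff h₁.ne' h₂.ne']
  field_simp

/-- The uplink rate at a positive transmit power is positive. -/
lemma uplink_rate_pos {B N₀ p h : ℝ} (hB : 0 < B) (hN₀ : 0 < N₀) (hp : 0 < p) (hh : 0 < h) :
    0 < B * Real.log (1 + p * h / (N₀ * B)) :=
  mul_pos hB (Real.log_pos (lt_add_of_pos_right 1 (by positivity)))

/-- The uplink rate is monotone in the transmit power. -/
lemma uplink_rate_mono {B N₀ p q h : ℝ} (hB : 0 < B) (hN₀ : 0 < N₀) (hh : 0 < h) (hp : 0 ≤ p)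
    (hpq : p ≤ q) :
    B * Real.log (1 + p * h / (N₀ * B)) ≤ B * Real.log (1 + q * h / (N₀ * B)) := by
  have h₀ : 0 < 1 + p * h / (N₀ * B) := by positivity
  gcongr

/-- Feasibility condition (Lemma 1) of the energy-efficient collaborative
computing problem (P1): a feasible allocation exists iff the computing load
`L` does not exceed the maximum computing capacity `L_max`. -/
theorem feasibility_iff (N : ℕ) (hN : 1 ≤ N)
    (τ L α β B N₀ : ℝ) (hτ : 0 < τ) (hL : 0 < L) (hα : 0 < α) (hβ : 0 < β)
    (hB : 0 < B) (hN₀ : 0 < N₀)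
    (c fmax h pmax : Fin N → ℝ)
    (hc : ∀ n, 0 < c n) (hfmax : ∀ n, 0 < fmax n)
    (hh : ∀ n, 0 < h n) (hpmax : ∀ n, 0 < pmax n) :
    (∃ (l tM tS p : Fin N → ℝ) (tR : ℝ),
      (∀ n, 0 ≤ l n) ∧ (∀ n, 0 ≤ tM n) ∧ (∀ n, 0 ≤ tS n) ∧
      (∀ n, 0 ≤ p n) ∧ 0 ≤ tR ∧
      (∑ n : Fin N, l n) = L ∧
      (∀ n, c n * l n ≤ tM n * fmax n) ∧
      β * L * (Finset.univ.sup'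
          (Finset.univ_nonempty_iff.mpr (Fin.pos_iff_nonempty.mp hN))
          (fun m => c m / fmax m)) ≤ tR ∧
      (∀ n, tM n + tS n ≤ τ - tR) ∧
      (∀ n, α * l n ≤ tS n * (B * Real.log (1 + p n * h n / (N₀ * B)))) ∧
      (∀ n, p n ≤ pmax n))
    ↔ L ≤ ∑ n : Fin N,
        ((τ - β * L * (Finset.univ.sup'
            (Finset.univ_nonempty_iff.mpr (Fin.pos_iff_nonempty.mp hN))
            (fun m => c m / fmax m))) /
          (1 + (α * fmax n / c n) /
            (B * Real.log (1 + pmax n * h n / (N₀ * B))))) *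
          (fmax n / c n) := by
  have hR n : 0 < B * Real.log (1 + pmax n * h n / (N₀ * B)) :=
    uplink_rate_pos hB hN₀ (hpmax n) (hh n)
  have hD n : 0 < c n / fmax n + α / (B * Real.log (1 + pmax n * h n / (N₀ * B))) :=
    add_pos (div_pos (hc n) (hfmax n)) (div_pos hα (hR n))
  have hM : 0 ≤ Finset.univ.sup'
      (Finset.univ_nonempty_iff.mpr (Fin.pos_iff_nonempty.mp hN)) (fun m => c m / fmax m) :=
    (div_pos (hc ⟨0, hN⟩) (hfmax ⟨0, hN⟩)).le.trans
      (Finset.le_sup' (fun m => c m / fmax m) (Finset.mem_univ _))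
  generalize Finset.univ.sup'
      (Finset.univ_nonempty_iff.mpr (Fin.pos_iff_nonempty.mp hN)) (fun m => c m / fmax m) = M
    at hM ⊢
  simp_rw [fun n => capacity_eq (T := τ - β * L * M) (hc n) (hfmax n) hα (hR n)]
  constructor
  · rintro ⟨l, tM, tS, p, tR, -, -, htS, hp, -, hsum, hmap, hred, htime, hshuffle, hpm⟩
    rw [← hsum]
    refine Finset.sum_le_sum fun n _ => ?_
    rw [hsum, le_div_iff₀ (hD n)]
    have hmap_time : c n * l n / fmax n ≤ tM n := (div_le_iff₀ (hfmax n)).2 (hmap n)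
    have hshuffle_time : α * l n / (B * Real.log (1 + pmax n * h n / (N₀ * B))) ≤ tS n :=
      (div_le_iff₀ (hR n)).2 ((hshuffle n).trans
        (mul_le_mul_of_nonneg_left (uplink_rate_mono hB hN₀ (hh n) (hp n) (hpm n)) (htS n)))
    calc l n * (c n / fmax n + α / (B * Real.log (1 + pmax n * h n / (N₀ * B))))
        = c n * l n / fmax n + α * l n / (B * Real.log (1 + pmax n * h n / (N₀ * B))) := by ring
      _ ≤ τ - β * L * M := by linarith [htime n]
  · intro hle
    have hT : 0 ≤ τ - β * L * M := by
      by_contra! hneg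
      exact (hL.trans_le hle).not_ge
        (Finset.sum_nonpos fun n _ => div_nonpos_of_nonpos_of_nonneg hneg.le (hD n).le)
    obtain ⟨l, hl, hlcap, hsum⟩ :=
      exists_nonneg_le_sum_eq hL (fun n => div_nonneg hT (hD n).le) hle
    refine ⟨l, fun n => c n * l n / fmax n,
      fun n => α * l n / (B * Real.log (1 + pmax n * h n / (N₀ * B))), pmax, β * L * M, hl,
      fun n => div_nonneg (mul_nonneg (hc n).le (hl n)) (hfmax n).le,
      fun n => div_nonneg (mul_nonneg hα.le (hl n)) (hR n).le, fun n => (hpmax n).le,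
      by positivity, hsum, fun n => (div_mul_cancel₀ _ (hfmax n).ne').ge, le_rfl, fun n => ?_,
      fun n => (div_mul_cancel₀ _ (hR n).ne').ge, fun n => le_rfl⟩
    calc c n * l n / fmax n + α * l n / (B * Real.log (1 + pmax n * h n / (N₀ * B)))
        = l n * (c n / fmax n + α / (B * Real.log (1 + pmax n * h n / (N₀ * B)))) := by ring
      _ ≤ τ - β * L * M := (le_div_iff₀ (hD n)).1 (hlcap n)
end

section
/- Fix an integer N ≥ 1 and positive real constants τ, L, α, β, B, N₀, and for each n = 1,…,N positive constants c_n, f_n^max, h_n, p_n^max; write R_n = B·ln(1 + p_n^max·h_n/(N₀·B)). Then there exist tᴹ, tˢ ∈ ℝᴺ and tᴿ ∈ ℝ, all with nonnegative entries, satisfying c_n·(L/N) ≤ tᴹ_n·f_n^max for all n; α·(L/N) ≤ tˢ_n·R_n for all n; β·L·max_m (c_m/f_m^max) ≤ tᴿ; and tᴹ_n + tˢ_n ≤ τ − tᴿ for all n; if and only if L ≤ N · min_{n} [ (τ − β·L·max_m(c_m/f_m^max)) / (1 + (α·f_n^max/c_n)/R_n) ] · (f_n^max/c_n). -/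
open Finset

/-- Processing `x` bits and then transmitting `α * x` bits at rate `R` fits in time `T` iff
`x` is at most the corresponding load bound. -/
lemma le_div_mul_iff_map_add_shuffle_le {c f R α : ℝ} (hc : 0 < c) (hf : 0 < f) (hR : 0 < R)
    (hα : 0 < α) (x T : ℝ) :
    x ≤ T / (1 + (α * f / c) / R) * (f / c) ↔ c * x / f + α * x / R ≤ T := by
  have hden : 0 < c * R + α * f := by positivity
  have hbound : T / (1 + (α * f / c) / R) * (f / c) = T * (f * R) / (c * R + α * f) := by
    field_simp
  have htime : c * x / f + α * x / R = x * (c * R + α * f) / (f * R) := by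
    field_simp
  rw [hbound, htime, le_div_iff₀ hden, div_le_iff₀ (mul_pos hf hR)]

/-- Maximum computing load of the `Blind` scheme (Lemma 6): a feasible uniform
allocation (each device processing `L/N` bits) exists iff
`L ≤ N * min_n [(τ - βL max_m(c_m/f_m)) / (1 + (α f_n/c_n)/R_n)] * (f_n/c_n)`. -/
theorem blind_feasibility_iff (N : ℕ) (hN : 1 ≤ N)
    (τ L α β B N₀ : ℝ) (hτ : 0 < τ) (hL : 0 < L) (hα : 0 < α) (hβ : 0 < β)
    (hB : 0 < B) (hN₀ : 0 < N₀)
    (c fmax h pmax : Fin N → ℝ)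
    (hc : ∀ n, 0 < c n) (hfmax : ∀ n, 0 < fmax n)
    (hh : ∀ n, 0 < h n) (hpmax : ∀ n, 0 < pmax n) :
    (∃ (tM tS : Fin N → ℝ) (tR : ℝ),
      (∀ n, 0 ≤ tM n) ∧ (∀ n, 0 ≤ tS n) ∧ 0 ≤ tR ∧
      (∀ n, c n * (L / N) ≤ tM n * fmax n) ∧
      (∀ n, α * (L / N) ≤ tS n * (B * Real.log (1 + pmax n * h n / (N₀ * B)))) ∧
      β * L * (Finset.univ.sup'
          (Finset.univ_nonempty_iff.mpr (Fin.pos_iff_nonempty.mp hN))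
          (fun m => c m / fmax m)) ≤ tR ∧
      (∀ n, tM n + tS n ≤ τ - tR))
    ↔ L ≤ N * (Finset.univ.inf'
        (Finset.univ_nonempty_iff.mpr (Fin.pos_iff_nonempty.mp hN))
        (fun n =>
          ((τ - β * L * (Finset.univ.sup'
              (Finset.univ_nonempty_iff.mpr (Fin.pos_iff_nonempty.mp hN))
              (fun m => c m / fmax m))) /
            (1 + (α * fmax n / c n) /
              (B * Real.log (1 + pmax n * h n / (N₀ * B))))) *
            (fmax n / c n))) := by
  have hN' : (0 : ℝ) < N := by exact_mod_cast hN
  have hR : ∀ n, 0 < B * Real.log (1 + pmax n * h n / (N₀ * B)) := fun n => by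
    have : 0 < pmax n * h n / (N₀ * B) :=
      div_pos (mul_pos (hpmax n) (hh n)) (mul_pos hN₀ hB)
    exact mul_pos hB (Real.log_pos (by linarith))
  have hx : 0 ≤ L / N := (div_pos hL hN').le
  rw [← div_le_iff₀' hN', Finset.le_inf'_iff]
  simp only [Finset.mem_univ, true_imp_iff,
    le_div_mul_iff_map_add_shuffle_le (hc _) (hfmax _) (hR _) hα]
  constructor
  · rintro ⟨tM, tS, tR, -, -, -, hMap, hShuffle, hReduce, hDeadline⟩ n
    have hM := (div_le_iff₀ (hfmax n)).mpr (hMap n)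
    have hS := (div_le_iff₀ (hR n)).mpr (hShuffle n)
    linarith [hDeadline n]
  · intro hfit
    refine ⟨fun n => c n * (L / N) / fmax n,
      fun n => α * (L / N) / (B * Real.log (1 + pmax n * h n / (N₀ * B))), _,
      fun n => div_nonneg (mul_nonneg (hc n).le hx) (hfmax n).le,
      fun n => div_nonneg (mul_nonneg hα.le hx) (hR n).le, ?_,
      fun n => (div_mul_cancel₀ _ (hfmax n).ne').ge,
      fun n => (div_mul_cancel₀ _ (hR n).ne').ge, le_rfl, hfit⟩
    refine mul_nonneg (mul_pos hβ hL).le ?_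
    exact (div_pos (hc ⟨0, hN⟩) (hfmax ⟨0, hN⟩)).le.trans
      (Finset.le_sup' (fun m => c m / fmax m) (Finset.mem_univ ⟨0, hN⟩))
end

section
/- Let B > 0, h > 0, N₀ > 0, p^max > 0, t > 0 and μ ≥ 0 be real constants. Define p* = 0 if B·μ ≤ B·N₀/h; p* = B·(μ − N₀/h) if B·N₀/h < B·μ < B·N₀/h + p^max; and p* = p^max if B·μ ≥ B·N₀/h + p^max. Then E* = p*·t minimizes the function E ↦ E − μ·t·B·ln(1 + (E/t)·h/(N₀·B)) over the interval [0, t·p^max]; that is, E* ∈ [0, t·p^max] and E* − μ·t·B·ln(1 + (E*/t)·h/(N₀·B)) ≤ E − μ·t·B·ln(1 + (E/t)·h/(N₀·B)) for every E ∈ [0, t·p^max]. -/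
/-- A feasible point satisfying the first-order variational inequality beats its competitor for the
convex function `x ↦ x - m * log (1 + x / c)`. -/
theorem sub_mul_log_one_add_div_le {c m p q : ℝ} (hc : 0 < c) (hm : 0 ≤ m) (hp : 0 ≤ p)
    (hq : 0 ≤ q) (hpq : 0 ≤ (q - p) * (c + p - m)) :
    p - m * Real.log (1 + p / c) ≤ q - m * Real.log (1 + q / c) := by
  have hcp : 0 < c + p := by positivity
  have hlog : Real.log (1 + q / c) - Real.log (1 + p / c) ≤ (q - p) / (c + p) := by
    rw [← Real.log_div (by positivity) (by positivity)]
    refine (Real.log_le_sub_one_of_pos (by positivity)).trans_eq ?_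
    field_simp
    ring
  have hslope : m * ((q - p) / (c + p)) ≤ q - p := by
    rw [← mul_div_assoc, div_le_iff₀ hcp]
    linarith
  linarith [mul_le_mul_of_nonneg_left hlog hm]

/-- Solution of the Shuffle-phase Lagrangian subproblem (Lemma 4): the RF
energy `E* = p* t`, where `p*` is the optimal RF transmit power, minimizes
`E ↦ E - μ t B ln (1 + (E/t) h / (N₀ B))` over `[0, t p^max]`. -/
theorem shuffle_subproblem_solution (B h N₀ pmax t μ : ℝ)
    (hB : 0 < B) (hh : 0 < h) (hN₀ : 0 < N₀) (hpmax : 0 < pmax)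
    (ht : 0 < t) (hμ : 0 ≤ μ)
    (p : ℝ)
    (hp : p = if B * μ ≤ B * N₀ / h then 0
      else if B * μ < B * N₀ / h + pmax then B * (μ - N₀ / h)
      else pmax) :
    p * t ∈ Set.Icc 0 (t * pmax) ∧
      ∀ E ∈ Set.Icc 0 (t * pmax),
        p * t - μ * t * B * Real.log (1 + (p * t / t) * h / (N₀ * B)) ≤
          E - μ * t * B * Real.log (1 + (E / t) * h / (N₀ * B)) := by
  have hc : 0 < B * N₀ / h := by positivity
  have hform : B * (μ - N₀ / h) = B * μ - B * N₀ / h := by ring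
  rw [hform] at hp
  have hp0 : 0 ≤ p := by split_ifs at hp <;> linarith
  have hpm : p ≤ pmax := by split_ifs at hp <;> linarith
  refine ⟨⟨by positivity, by nlinarith⟩, fun E ⟨hE0, hE1⟩ => ?_⟩
  have hq0 : 0 ≤ E / t := by positivity
  have hqm : E / t ≤ pmax := by rwa [div_le_iff₀' ht]
  have hvar : 0 ≤ (E / t - p) * (B * N₀ / h + p - B * μ) := by
    split_ifs at hp
    · exact mul_nonneg (by linarith) (by linarith)
    · simp [hp]
    · exact mul_nonneg_of_nonpos_of_nonpos (by linarith) (by linarith)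
  have key := mul_le_mul_of_nonneg_left
    (sub_mul_log_one_add_div_le hc (by positivity) hp0 hq0 hvar) ht.le
  have harg (x : ℝ) : x * h / (N₀ * B) = x / (B * N₀ / h) := by field_simp
  have hE : t * (E / t) = E := mul_div_cancel₀ E ht.ne'
  rw [mul_div_cancel_right₀ p ht.ne', harg, harg]
  linarith
end
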